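/- arXiv:1209.3494 — 2 statements merged into one kernel-verified Lean document; each statement's English description precedes it below -/
import Mathlib

section
/- Let 0 < p < 1. For all real α, β with α ≥ β > 0 and α² + β² = 1, the fidelity of ρ(χ(α), Λ_p) satisfies F(ρ(χ(α), Λ_p)) ≤ 1 − p/2, with equality if and only if α² = 1/(2−p) (equivalently, |χ(α)⟩ = |χ₀⟩ := (1/√(2−p))|00⟩ + √((1−p)/(2−p))|11⟩). In particular the maximum pre-processed fidelity over all transmitted pure states is F_max = 1 − p/2, attained by a non-maximally entangled state. -/
open Matrix Complex
open scoped Kronecker ComplexOrder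

/-- Index type for two qubits: the product basis of ℂ² ⊗ ℂ². -/
abbrev Q2 := Fin 2 × Fin 2

/-- Kraus operator `M₀` of the amplitude damping channel. -/
noncomputable def M0 (p : ℝ) : Matrix (Fin 2) (Fin 2) ℂ :=
  !![1, 0; 0, (Real.sqrt (1 - p) : ℂ)]

/-- Kraus operator `M₁` of the amplitude damping channel. -/
noncomputable def M1 (p : ℝ) : Matrix (Fin 2) (Fin 2) ℂ :=
  !![0, (Real.sqrt p : ℂ); 0, 0]

/-- Outer product `|ψ⟩⟨ψ|` of a two-qubit vector. -/
noncomputable def outer (ψ : Q2 → ℂ) : Matrix Q2 Q2 ℂ :=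
  Matrix.of fun i j => ψ i * star (ψ j)

/-- The state `ρ(χ, Λ_p)` obtained by applying the amplitude damping channel
with parameter `p` to the second qubit: `Σᵢ (I ⊗ Mᵢ) ρ (I ⊗ Mᵢ)†`. -/
noncomputable def ampDamp (p : ℝ) (ρ : Matrix Q2 Q2 ℂ) : Matrix Q2 Q2 ℂ :=
  ((1 : Matrix (Fin 2) (Fin 2) ℂ) ⊗ₖ M0 p) * ρ * ((1 : Matrix (Fin 2) (Fin 2) ℂ) ⊗ₖ M0 p)ᴴ +
  ((1 : Matrix (Fin 2) (Fin 2) ℂ) ⊗ₖ M1 p) * ρ * ((1 : Matrix (Fin 2) (Fin 2) ℂ) ⊗ₖ M1 p)ᴴ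

/-- The pure state `|χ⟩ = a|00⟩ + b|11⟩`. -/
noncomputable def ketChi (a b : ℝ) : Q2 → ℂ :=
  fun ij => if ij = ((0 : Fin 2), (0 : Fin 2)) then (a : ℂ)
    else if ij = ((1 : Fin 2), (1 : Fin 2)) then (b : ℂ) else 0

/-- The maximally entangled state `|Φ⁺⟩ = (|00⟩ + |11⟩)/√2`. -/
noncomputable def phiPlus : Q2 → ℂ := ketChi (Real.sqrt 2)⁻¹ (Real.sqrt 2)⁻¹

/-- The optimal transmitted state `|χ₀⟩ = (1/√(2−p))|00⟩ + √((1−p)/(2−p))|11⟩`. -/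
noncomputable def ketChi0 (p : ℝ) : Q2 → ℂ :=
  ketChi (Real.sqrt (1 / (2 - p))) (Real.sqrt ((1 - p) / (2 - p)))

/-- Reduced density matrix on the first qubit (trace out the second qubit). -/
noncomputable def trSecond (ρ : Matrix Q2 Q2 ℂ) : Matrix (Fin 2) (Fin 2) ℂ :=
  Matrix.of fun i k => ∑ j : Fin 2, ρ (i, j) (k, j)

/-- Reduced density matrix on the second qubit (trace out the first qubit). -/
noncomputable def trFirst (ρ : Matrix Q2 Q2 ℂ) : Matrix (Fin 2) (Fin 2) ℂ :=
  Matrix.of fun j l => ∑ i : Fin 2, ρ (i, j) (i, l)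

/-- A unit vector `ψ ∈ ℂ²⊗ℂ²` is maximally entangled if both reduced density
matrices of `|ψ⟩⟨ψ|` equal `I/2`. -/
def MaxEnt (ψ : Q2 → ℂ) : Prop :=
  (∑ ij : Q2, Complex.normSq (ψ ij)) = 1 ∧
  trSecond (outer ψ) = (1 / 2 : ℂ) • (1 : Matrix (Fin 2) (Fin 2) ℂ) ∧
  trFirst (outer ψ) = (1 / 2 : ℂ) • (1 : Matrix (Fin 2) (Fin 2) ℂ)

/-- The real expectation value `⟨ψ|ρ|ψ⟩`. -/
noncomputable def expectation (ψ : Q2 → ℂ) (ρ : Matrix Q2 Q2 ℂ) : ℝ :=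
  (∑ i : Q2, ∑ j : Q2, star (ψ i) * ρ i j * ψ j).re

/-- Fidelity (fully entangled fraction): `F(ρ) = sup_Ψ ⟨Ψ|ρ|Ψ⟩` over maximally
entangled unit vectors `Ψ`. -/
noncomputable def Fid (ρ : Matrix Q2 Q2 ℂ) : ℝ :=
  sSup {x : ℝ | ∃ ψ : Q2 → ℂ, MaxEnt ψ ∧ x = expectation ψ ρ}

/-- Partial transposition on the second qubit: `(ρ^Γ)_{(i,j),(k,l)} = ρ_{(i,l),(k,j)}`. -/
def ptrans (ρ : Matrix Q2 Q2 ℂ) : Matrix Q2 Q2 ℂ :=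
  Matrix.of fun ij kl => ρ (ij.1, kl.2) (kl.1, ij.2)

/-- The Verstraete–Verschelde maximum achievable fidelity under trace-preserving LOCC,
as the value of the semidefinite program
`F*(ρ) = sup { 1/2 − Tr(X ρ^Γ) : X Hermitian, 0 ≤ X ≤ I, −I/2 ≤ X^Γ ≤ I/2 }`. -/
noncomputable def FStar (ρ : Matrix Q2 Q2 ℂ) : ℝ :=
  sSup {x : ℝ | ∃ X : Matrix Q2 Q2 ℂ,
    X.IsHermitian ∧ X.PosSemidef ∧ ((1 : Matrix Q2 Q2 ℂ) - X).PosSemidef ∧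
    (ptrans X + (1 / 2 : ℂ) • (1 : Matrix Q2 Q2 ℂ)).PosSemidef ∧
    ((1 / 2 : ℂ) • (1 : Matrix Q2 Q2 ℂ) - ptrans X).PosSemidef ∧
    x = 1 / 2 - ((X * ptrans ρ).trace).re}

/-- The Pauli matrix `σ_y`. -/
noncomputable def sigY : Matrix (Fin 2) (Fin 2) ℂ := !![0, -Complex.I; Complex.I, 0]

/-- The matrix `ρ (σ_y⊗σ_y) ρ̄ (σ_y⊗σ_y)` whose eigenvalues define the concurrence. -/
noncomputable def Rmat (ρ : Matrix Q2 Q2 ℂ) : Matrix Q2 Q2 ℂ :=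
  ρ * (sigY ⊗ₖ sigY) * ρ.map (starRingEnd ℂ) * (sigY ⊗ₖ sigY)

/-- `c` is the concurrence of `ρ`: `c = max(0, λ₁ − λ₂ − λ₃ − λ₄)` where
`λ₁ ≥ λ₂ ≥ λ₃ ≥ λ₄ ≥ 0` are the square roots of the eigenvalues (with multiplicity)
of `ρ (σ_y⊗σ_y) ρ̄ (σ_y⊗σ_y)`. -/
def IsConcurrence (ρ : Matrix Q2 Q2 ℂ) (c : ℝ) : Prop :=
  ∃ lam : Fin 4 → ℝ,
    (∀ i j : Fin 4, i ≤ j → lam j ≤ lam i) ∧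
    (∀ i : Fin 4, 0 ≤ lam i) ∧
    (Rmat ρ).charpoly = ∏ i : Fin 4, (Polynomial.X - Polynomial.C ((lam i : ℂ) ^ 2)) ∧
    c = max 0 (lam 0 - lam 1 - lam 2 - lam 3)

/-- `μ` is an eigenvalue of the matrix `A`. -/
def IsEigenvalue (A : Matrix Q2 Q2 ℂ) (μ : ℂ) : Prop :=
  ∃ v : Q2 → ℂ, v ≠ 0 ∧ A *ᵥ v = μ • v

/-!
Moving the Kraus operators onto the maximally entangled vector `Ψ` gives
`⟨Ψ|ρ(χ, Λ_p)|Ψ⟩ = ∑ᵢ |⟨(I ⊗ Mᵢ)†Ψ, χ⟩|²`. Since the second marginal of `Ψ` is `I/2`, the two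
vectors `(I ⊗ Mᵢ)†Ψ` are orthogonal, with squared norms `1 - p/2` and `p/2`. A Bessel-type
inequality bounds the sum by `1 - p/2`, with equality exactly when `χ` is parallel to `(I ⊗ M₀)Ψ`.
The unit vectors parallel to `(I ⊗ M₀)Ψ` for some maximally entangled `Ψ` are those whose second
marginal is `M₀² / (2 - p)`, the marginal of `χ₀`; by compactness the supremum over `Ψ` is attained.
-/

section Bessel

variable {𝕜 E : Type*} [RCLike 𝕜] [NormedAddCommGroup E] [InnerProductSpace 𝕜 E]

open scoped InnerProductSpace

theorem norm_inner_sq_add_norm_inner_sq_le {u v : E} (huv : ⟪v, u⟫_𝕜 = 0) (x : E) :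
    ‖⟪u, x⟫_𝕜‖ ^ 2 + ‖⟪v, x⟫_𝕜‖ ^ 2 ≤
      ‖u‖ ^ 2 * ‖x‖ ^ 2 - (‖u‖ ^ 2 - ‖v‖ ^ 2) * ‖(𝕜 ∙ u)ᗮ.starProjection x‖ ^ 2 := by
  set y := (𝕜 ∙ u).starProjection x with hy
  set w := (𝕜 ∙ u)ᗮ.starProjection x
  have hx : y + w = x := Submodule.starProjection_add_starProjection_orthogonal x
  have hpyth : ‖x‖ ^ 2 = ‖y‖ ^ 2 + ‖w‖ ^ 2 := Submodule.norm_sq_eq_add_norm_sq_starProjection x _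
  have huw : ⟪u, w⟫_𝕜 = 0 :=
    Submodule.mem_orthogonal_singleton_iff_inner_right.mp (Submodule.starProjection_apply_mem _ x)
  have hvy : ⟪v, y⟫_𝕜 = 0 := by
    rw [hy, Submodule.starProjection_singleton, inner_smul_right, huv, mul_zero]
  have hu : ‖⟪u, x⟫_𝕜‖ ^ 2 ≤ ‖u‖ ^ 2 * ‖y‖ ^ 2 := by
    rw [← hx, inner_add_right, huw, add_zero, ← mul_pow]
    gcongr
    exact norm_inner_le_norm u y
  have hv : ‖⟪v, x⟫_𝕜‖ ^ 2 ≤ ‖v‖ ^ 2 * ‖w‖ ^ 2 := by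
    rw [← hx, inner_add_right, hvy, zero_add, ← mul_pow]
    gcongr
    exact norm_inner_le_norm v w
  linear_combination hu + hv - ‖u‖ ^ 2 * hpyth

theorem norm_inner_sq_add_norm_inner_sq_eq_iff {u v : E} (huv : ⟪v, u⟫_𝕜 = 0) (hlt : ‖v‖ < ‖u‖)
    (x : E) : ‖⟪u, x⟫_𝕜‖ ^ 2 + ‖⟪v, x⟫_𝕜‖ ^ 2 = ‖u‖ ^ 2 * ‖x‖ ^ 2 ↔ ∃ c : 𝕜, x = c • u := by
  constructor
  · intro heq
    have hle := norm_inner_sq_add_norm_inner_sq_le huv x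
    have hgap : 0 < ‖u‖ ^ 2 - ‖v‖ ^ 2 := by
      rw [sub_pos]
      gcongr
    have hw : ‖(𝕜 ∙ u)ᗮ.starProjection x‖ ^ 2 = 0 := by
      nlinarith [sq_nonneg ‖(𝕜 ∙ u)ᗮ.starProjection x‖]
    have hx := Submodule.starProjection_add_starProjection_orthogonal (K := 𝕜 ∙ u) x
    rw [norm_eq_zero.mp (pow_eq_zero_iff two_ne_zero |>.mp hw), add_zero,
      Submodule.starProjection_singleton] at hx
    exact ⟨_, hx.symm⟩
  · rintro ⟨c, rfl⟩
    rw [inner_smul_right, inner_smul_right, huv, inner_self_eq_norm_sq_to_K, norm_smul, mul_zero,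
      norm_zero, norm_mul, norm_pow, RCLike.norm_ofReal, abs_norm]
    ring

end Bessel

section Ket

variable {m n : Type*} [Fintype m] [Fintype n]

theorem sum_normSq_vec (X : Matrix m n ℂ) :
    ((∑ ij, normSq (vec X ij) : ℝ) : ℂ) = (X * Xᴴ).trace := by
  rw [trace_mul_comm, ← star_vec_dotProduct_vec]
  simp [dotProduct, normSq_eq_conj_mul_self]

/-- The vector `vec X = ∑ X j i |i⟩|j⟩` as an element of the Hilbert space `ℂⁿ ⊗ ℂᵐ`. With this
indexing `I ⊗ A` acts on it as left multiplication of `X` by `A`. -/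
noncomputable abbrev ket {m n : Type*} (X : Matrix m n ℂ) : EuclideanSpace ℂ (n × m) :=
  WithLp.toLp 2 (vec X)

theorem inner_ket (X Y : Matrix m n ℂ) : inner ℂ (ket X) (ket Y) = (Xᴴ * Y).trace := by
  rw [EuclideanSpace.inner_eq_star_dotProduct, dotProduct_comm, star_vec_dotProduct_vec]

theorem inner_ket_mul_right {l : Type*} [Fintype l] (X : Matrix l n ℂ) (A : Matrix l m ℂ)
    (Y : Matrix m n ℂ) : inner ℂ (ket X) (ket (A * Y)) = inner ℂ (ket (Aᴴ * X)) (ket Y) := by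
  rw [inner_ket, inner_ket, conjTranspose_mul, conjTranspose_conjTranspose, Matrix.mul_assoc]

theorem norm_ket_sq (X : Matrix m n ℂ) : ‖ket X‖ ^ 2 = ∑ ij, normSq (vec X ij) := by
  simp only [EuclideanSpace.norm_sq_eq, normSq_eq_norm_sq]

end Ket

section Marginals

variable (X Y : Matrix (Fin 2) (Fin 2) ℂ)

theorem outer_mulVec (K : Matrix Q2 Q2 ℂ) (ψ : Q2 → ℂ) :
    outer (K *ᵥ ψ) = K * outer ψ * Kᴴ := by
  change vecMulVec (K *ᵥ ψ) (star (K *ᵥ ψ)) = K * vecMulVec ψ (star ψ) * Kᴴ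
  rw [mul_vecMulVec, vecMulVec_mul, star_mulVec]

theorem trFirst_outer_vec : trFirst (outer (vec X)) = X * Xᴴ := by
  ext
  simp [trFirst, outer, mul_apply]

theorem trSecond_outer_vec : trSecond (outer (vec X)) = (Xᴴ * X)ᵀ := by
  ext
  simp [trSecond, outer, mul_apply, mul_comm]

variable {X} in
theorem maxEnt_vec_iff :
    MaxEnt (vec X) ↔ X * Xᴴ = (1 / 2 : ℂ) • (1 : Matrix (Fin 2) (Fin 2) ℂ) := by
  rw [MaxEnt, trSecond_outer_vec, trFirst_outer_vec]
  refine ⟨fun h => h.2.2, fun h => ⟨?_, ?_, h⟩⟩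
  · rw [← ofReal_inj, sum_normSq_vec, h]
    simp
  · have hinv : (2 : ℂ) • Xᴴ * X = 1 := by
      rw [mul_eq_one_comm, Matrix.mul_smul, h]
      simp
    have hswap : Xᴴ * X = (1 / 2 : ℂ) • 1 := by
      rw [← hinv, Matrix.smul_mul]
      simp
    rw [hswap, transpose_smul, transpose_one]

variable {X} in
theorem inner_ket_mul_mul_of_maxEnt (hX : MaxEnt (vec X)) (A B : Matrix (Fin 2) (Fin 2) ℂ) :
    inner ℂ (ket (A * X)) (ket (B * X)) = (Aᴴ * B).trace / 2 := by
  rw [inner_ket, conjTranspose_mul, mul_assoc, trace_mul_comm, ← mul_assoc Aᴴ, mul_assoc,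
    maxEnt_vec_iff.mp hX]
  simp [div_eq_inv_mul]

variable {X} in
theorem norm_ket_mul_sq_of_maxEnt (hX : MaxEnt (vec X)) (A : Matrix (Fin 2) (Fin 2) ℂ) :
    ((‖ket (A * X)‖ ^ 2 : ℝ) : ℂ) = (Aᴴ * A).trace / 2 := by
  rw [← inner_ket_mul_mul_of_maxEnt hX, inner_self_eq_norm_sq_to_K]
  simp

variable {X} in
theorem mul_mul_conjTranspose_of_maxEnt (hX : MaxEnt (vec X)) (A : Matrix (Fin 2) (Fin 2) ℂ) :
    A * X * (A * X)ᴴ = (1 / 2 : ℂ) • (A * Aᴴ) := by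
  rw [conjTranspose_mul, mul_assoc, ← mul_assoc X, maxEnt_vec_iff.mp hX, Matrix.smul_mul,
    Matrix.one_mul, Matrix.mul_smul]

variable {Y} in
theorem exists_maxEnt_eq_mul {A : Matrix (Fin 2) (Fin 2) ℂ} (hA : IsUnit A.det)
    (hY : Y * Yᴴ = (1 / 2 : ℂ) • (A * Aᴴ)) : ∃ X, MaxEnt (vec X) ∧ Y = A * X := by
  refine ⟨A⁻¹ * Y, maxEnt_vec_iff.mpr ?_, (mul_nonsing_inv_cancel_left _ _ hA).symm⟩
  calc A⁻¹ * Y * (A⁻¹ * Y)ᴴ = A⁻¹ * (Y * Yᴴ) * (A⁻¹)ᴴ := by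
        rw [conjTranspose_mul]
        simp only [mul_assoc]
    _ = (1 / 2 : ℂ) • (A⁻¹ * A * (A⁻¹ * A)ᴴ) := by
        rw [hY, conjTranspose_mul]
        simp only [Matrix.mul_smul, Matrix.smul_mul, mul_assoc]
    _ = (1 / 2 : ℂ) • 1 := by
        rw [nonsing_inv_mul _ hA, conjTranspose_one, Matrix.one_mul]

end Marginals

section Fidelity

theorem expectation_add (ψ : Q2 → ℂ) (ρ σ : Matrix Q2 Q2 ℂ) :
    expectation ψ (ρ + σ) = expectation ψ ρ + expectation ψ σ := by
  simp only [expectation, Matrix.add_apply, mul_add, add_mul, Finset.sum_add_distrib, add_re]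

theorem expectation_outer (ψ φ : Q2 → ℂ) :
    expectation ψ (outer φ) = ‖inner ℂ (WithLp.toLp 2 ψ) (WithLp.toLp 2 φ)‖ ^ 2 := by
  have hfactor : ∑ i, ∑ j, star (ψ i) * outer φ i j * ψ j = (star ψ ⬝ᵥ φ) * (star φ ⬝ᵥ ψ) := by
    simp [dotProduct, outer, Finset.sum_mul_sum, mul_assoc]
  rw [expectation, hfactor, star_dotProduct φ ψ, EuclideanSpace.inner_eq_star_dotProduct,
    dotProduct_comm φ, ← normSq_eq_norm_sq, ← ofReal_re (normSq _), ← mul_conj, starRingEnd_apply]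

theorem ketChi_eq_vec (a b : ℝ) : ketChi a b = vec (diagonal ![(a : ℂ), (b : ℂ)]) := by
  ext ⟨i, j⟩
  fin_cases i <;> fin_cases j <;> simp [ketChi]

theorem sum_normSq_ketChi (a b : ℝ) : ∑ ij : Q2, normSq (ketChi a b ij) = a ^ 2 + b ^ 2 := by
  simp [ketChi, Fintype.sum_prod_type, sq]

theorem trFirst_outer_ketChi (a b : ℝ) :
    trFirst (outer (ketChi a b)) = diagonal ![(a : ℂ) ^ 2, (b : ℂ) ^ 2] := by
  rw [ketChi_eq_vec, trFirst_outer_vec, diagonal_conjTranspose, diagonal_mul_diagonal]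
  congr 1
  ext i
  fin_cases i <;> simp [sq]

theorem trFirst_outer_ketChi_eq_iff {a b c d : ℝ} :
    trFirst (outer (ketChi a b)) = trFirst (outer (ketChi c d)) ↔
      a ^ 2 = c ^ 2 ∧ b ^ 2 = d ^ 2 := by
  rw [trFirst_outer_ketChi, trFirst_outer_ketChi, diagonal_eq_diagonal_iff]
  simp only [Fin.forall_fin_two, cons_val_zero, cons_val_one]
  norm_cast

theorem maxEnt_phiPlus : MaxEnt phiPlus := by
  rw [phiPlus, ketChi_eq_vec, maxEnt_vec_iff, ← trFirst_outer_vec, ← ketChi_eq_vec,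
    trFirst_outer_ketChi]
  have hsq : (√2 : ℂ) ^ 2 = 2 := by
    rw [← ofReal_pow, Real.sq_sqrt zero_le_two, ofReal_ofNat]
  ext i j
  fin_cases i <;> fin_cases j <;> simp [hsq]

theorem isCompact_setOf_maxEnt : IsCompact {ψ : Q2 → ℂ | MaxEnt ψ} := by
  refine Metric.isCompact_of_isClosed_isBounded ?_ ?_
  · simp only [MaxEnt, trSecond, trFirst, outer, Set.ofPred_and]
    exact (isClosed_eq (by fun_prop) continuous_const).inter
      ((isClosed_eq (by fun_prop) continuous_const).inter
        (isClosed_eq (by fun_prop) continuous_const))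
  · refine (Metric.isBounded_closedBall (x := 0) (r := 1)).subset fun ψ hψ => ?_
    rw [mem_closedBall_zero_iff, pi_norm_le_iff_of_nonneg zero_le_one]
    intro ij
    rw [← sq_le_one_iff₀ (norm_nonneg _), ← normSq_eq_norm_sq, ← hψ.1]
    exact Finset.single_le_sum (f := fun k => normSq (ψ k)) (fun k _ => normSq_nonneg _)
      (Finset.mem_univ ij)

theorem isGreatest_fid (ρ : Matrix Q2 Q2 ℂ) :
    IsGreatest ((expectation · ρ) '' {ψ | MaxEnt ψ}) (Fid ρ) := by
  have hcont : Continuous (expectation · ρ) := by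
    unfold expectation
    fun_prop
  have hFid : Fid ρ = sSup ((expectation · ρ) '' {ψ | MaxEnt ψ}) := by
    simp only [Fid, Set.image, Set.mem_ofPred_eq, eq_comm]
  rw [hFid]
  exact (isCompact_setOf_maxEnt.image hcont).isGreatest_sSup
    (Set.Nonempty.image _ ⟨phiPlus, maxEnt_phiPlus⟩)

theorem fid_eq_iff_of_forall_le {ρ : Matrix Q2 Q2 ℂ} {m : ℝ}
    (hle : ∀ ψ, MaxEnt ψ → expectation ψ ρ ≤ m) :
    Fid ρ = m ↔ ∃ ψ, MaxEnt ψ ∧ expectation ψ ρ = m := by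
  constructor
  · rintro rfl
    exact (isGreatest_fid ρ).1
  · exact fun hattained => (isGreatest_fid ρ).unique ⟨hattained, Set.forall_mem_image.mpr hle⟩

end Fidelity

section AmplitudeDamping

variable {p : ℝ} {X Y : Matrix (Fin 2) (Fin 2) ℂ}

theorem conjTranspose_M0 (p : ℝ) : (M0 p)ᴴ = M0 p := by
  ext i j
  fin_cases i <;> fin_cases j <;> simp [M0]

theorem M0_mul_M0 (hp1 : p ≤ 1) : M0 p * M0 p = diagonal ![1, 1 - (p : ℂ)] := by
  have hsq : (√(1 - p) : ℂ) * √(1 - p) = 1 - p := by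
    rw [← ofReal_mul, Real.mul_self_sqrt (sub_nonneg.mpr hp1)]
    simp
  ext i j
  fin_cases i <;> fin_cases j <;> simp [M0, hsq]

theorem M1_mul_conjTranspose_M1 (hp0 : 0 ≤ p) :
    M1 p * (M1 p)ᴴ = diagonal ![(p : ℂ), 0] := by
  have hsq : (√p : ℂ) * √p = p := by rw [← ofReal_mul, Real.mul_self_sqrt hp0]
  ext i j
  fin_cases i <;> fin_cases j <;> simp [M1, mul_apply, hsq]

theorem trace_M1_mul_M0 (p : ℝ) : (M1 p * M0 p).trace = 0 := by
  simp [M0, M1, trace]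

theorem isUnit_det_M0 (hp1 : p < 1) : IsUnit (M0 p).det := by
  simpa [M0] using (Real.sqrt_pos.mpr (sub_pos.mpr hp1)).ne'

theorem norm_ket_M0_mul_sq (hp1 : p ≤ 1) (hX : MaxEnt (vec X)) :
    ‖ket (M0 p * X)‖ ^ 2 = 1 - p / 2 := by
  rw [← ofReal_inj, norm_ket_mul_sq_of_maxEnt hX, conjTranspose_M0, M0_mul_M0 hp1, trace_diagonal]
  simp only [Fin.sum_univ_two, cons_val_zero, cons_val_one]
  push_cast
  ring

theorem norm_ket_conjTranspose_M1_mul_sq (hp0 : 0 ≤ p) (hX : MaxEnt (vec X)) :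
    ‖ket ((M1 p)ᴴ * X)‖ ^ 2 = p / 2 := by
  rw [← ofReal_inj, norm_ket_mul_sq_of_maxEnt hX, conjTranspose_conjTranspose,
    M1_mul_conjTranspose_M1 hp0, trace_diagonal]
  simp

theorem inner_ket_conjTranspose_M1_mul_ket_M0_mul (p : ℝ) (hX : MaxEnt (vec X)) :
    inner ℂ (ket ((M1 p)ᴴ * X)) (ket (M0 p * X)) = 0 := by
  rw [inner_ket_mul_mul_of_maxEnt hX, conjTranspose_conjTranspose, trace_M1_mul_M0, zero_div]

theorem expectation_ampDamp_outer (p : ℝ) (X Y : Matrix (Fin 2) (Fin 2) ℂ) :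
    expectation (vec X) (ampDamp p (outer (vec Y))) =
      ‖inner ℂ (ket (M0 p * X)) (ket Y)‖ ^ 2 + ‖inner ℂ (ket ((M1 p)ᴴ * X)) (ket Y)‖ ^ 2 := by
  have hkraus : ampDamp p (outer (vec Y)) = outer (vec (M0 p * Y)) + outer (vec (M1 p * Y)) := by
    simp only [ampDamp, vec_mul_eq_mulVec, outer_mulVec]
  rw [hkraus, expectation_add, expectation_outer, expectation_outer, inner_ket_mul_right,
    inner_ket_mul_right, conjTranspose_M0]

theorem expectation_ampDamp_outer_le (hp0 : 0 ≤ p) (hp1 : p ≤ 1) (hX : MaxEnt (vec X))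
    (hY : ‖ket Y‖ ^ 2 = 1) :
    expectation (vec X) (ampDamp p (outer (vec Y))) ≤ 1 - p / 2 := by
  have hbessel := norm_inner_sq_add_norm_inner_sq_le
    (inner_ket_conjTranspose_M1_mul_ket_M0_mul p hX) (ket Y)
  rw [norm_ket_M0_mul_sq hp1 hX, norm_ket_conjTranspose_M1_mul_sq hp0 hX, hY] at hbessel
  rw [expectation_ampDamp_outer]
  nlinarith [sq_nonneg ‖(ℂ ∙ ket (M0 p * X))ᗮ.starProjection (ket Y)‖]

theorem expectation_ampDamp_outer_eq_iff (hp0 : 0 ≤ p) (hp1 : p < 1) (hX : MaxEnt (vec X))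
    (hY : ‖ket Y‖ ^ 2 = 1) :
    expectation (vec X) (ampDamp p (outer (vec Y))) = 1 - p / 2 ↔ ∃ c : ℂ, Y = c • (M0 p * X) := by
  have hlt : ‖ket ((M1 p)ᴴ * X)‖ < ‖ket (M0 p * X)‖ := by
    rw [← sq_lt_sq₀ (norm_nonneg _) (norm_nonneg _), norm_ket_M0_mul_sq hp1.le hX,
      norm_ket_conjTranspose_M1_mul_sq hp0 hX]
    linarith
  have hbessel := norm_inner_sq_add_norm_inner_sq_eq_iff
    (inner_ket_conjTranspose_M1_mul_ket_M0_mul p hX) hlt (ket Y)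
  rw [norm_ket_M0_mul_sq hp1.le hX, hY, mul_one] at hbessel
  simp only [expectation_ampDamp_outer, hbessel, ← WithLp.toLp_smul, ← vec_smul,
    (WithLp.toLp_injective 2).eq_iff, vec_inj]

theorem exists_maxEnt_eq_smul_M0_mul_iff (hp1 : p < 1) (hY : (Y * Yᴴ).trace = 1) :
    (∃ X, MaxEnt (vec X) ∧ ∃ c : ℂ, Y = c • (M0 p * X)) ↔
      Y * Yᴴ = (1 / (2 - p) : ℂ) • (M0 p * M0 p) := by
  have hscale (c : ℂ) : c • M0 p * (c • M0 p)ᴴ = (c * star c) • (M0 p * M0 p) := by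
    rw [conjTranspose_smul, conjTranspose_M0, Matrix.smul_mul, Matrix.mul_smul, smul_smul]
  constructor
  · rintro ⟨X, hX, c, rfl⟩
    have hmarginal : c • (M0 p * X) * (c • (M0 p * X))ᴴ =
        (1 / 2 * (c * star c)) • (M0 p * M0 p) := by
      rw [← Matrix.smul_mul, mul_mul_conjTranspose_of_maxEnt hX, hscale, smul_smul]
    have htrace : (M0 p * M0 p).trace = 2 - p := by
      simp only [M0_mul_M0 hp1.le, trace_diagonal, Fin.sum_univ_two, cons_val_zero, cons_val_one]
      ring
    rw [hmarginal, trace_smul, htrace, smul_eq_mul] at hY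
    rw [hmarginal, eq_one_div_of_mul_eq_one_left hY]
  · intro hmarginal
    have h2p : 0 < 2 / (2 - p) := div_pos two_pos (by linarith)
    obtain ⟨c, hcc⟩ : ∃ c : ℂ, c * star c = ((2 / (2 - p) : ℝ) : ℂ) := by
      refine ⟨√(2 / (2 - p)), ?_⟩
      rw [star_def, conj_ofReal, ← ofReal_mul, Real.mul_self_sqrt h2p.le]
    have hc0 : c ≠ 0 := left_ne_zero_of_mul (hcc ▸ ofReal_ne_zero.mpr h2p.ne')
    have hdet : IsUnit (c • M0 p).det := by
      rw [det_smul]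
      exact (hc0.isUnit.pow _).mul (isUnit_det_M0 hp1)
    have hY' : Y * Yᴴ = (1 / 2 : ℂ) • (c • M0 p * (c • M0 p)ᴴ) := by
      rw [hscale, hcc, smul_smul, hmarginal]
      congr 1
      push_cast
      ring
    obtain ⟨X, hX, hYX⟩ := exists_maxEnt_eq_mul hdet hY'
    exact ⟨X, hX, c, by rw [hYX, Matrix.smul_mul]⟩

theorem trFirst_outer_ketChi0 (hp1 : p ≤ 1) :
    trFirst (outer (ketChi0 p)) = (1 / (2 - p) : ℂ) • (M0 p * M0 p) := by
  have h2p : 0 ≤ 2 - p := by linarith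
  rw [ketChi0, trFirst_outer_ketChi, M0_mul_M0 hp1, ← diagonal_smul, ← ofReal_pow, ← ofReal_pow,
    Real.sq_sqrt (one_div_nonneg.mpr h2p), Real.sq_sqrt (div_nonneg (sub_nonneg.mpr hp1) h2p)]
  congr 1
  ext i
  fin_cases i <;> simp [div_eq_inv_mul]

theorem trFirst_outer_ketChi_eq_ketChi0_iff (hp1 : p ≤ 1) {a b : ℝ} (hab : a ^ 2 + b ^ 2 = 1) :
    trFirst (outer (ketChi a b)) = trFirst (outer (ketChi0 p)) ↔ a ^ 2 = 1 / (2 - p) := by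
  have h2p : 0 < 2 - p := by linarith
  have hb : a ^ 2 = 1 / (2 - p) → b ^ 2 = (1 - p) / (2 - p) := by
    intro ha
    rw [eq_div_iff h2p.ne'] at ha ⊢
    linear_combination (2 - p) * hab - ha
  rw [ketChi0, trFirst_outer_ketChi_eq_iff, Real.sq_sqrt (by positivity),
    Real.sq_sqrt (div_nonneg (sub_nonneg.mpr hp1) h2p.le)]
  exact and_iff_left_of_imp hb

end AmplitudeDamping

/-- Equality of the second marginals means that `χ = (U ⊗ I) χ₀` for some unitary `U`. -/
theorem fidelity_max_preprocessed_general (p : ℝ) (hp0 : 0 ≤ p) (hp1 : p < 1) (χ : Q2 → ℂ)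
    (hχ : ∑ ij : Q2, normSq (χ ij) = 1) :
    Fid (ampDamp p (outer χ)) ≤ 1 - p / 2 ∧
      (Fid (ampDamp p (outer χ)) = 1 - p / 2 ↔
        trFirst (outer χ) = trFirst (outer (ketChi0 p))) := by
  obtain ⟨Y, rfl⟩ := vec_bijective.surjective χ
  have hnorm : ‖ket Y‖ ^ 2 = 1 := by rw [norm_ket_sq, hχ]
  have htrace : (Y * Yᴴ).trace = 1 := by rw [← sum_normSq_vec, hχ, ofReal_one]
  have hle : ∀ ψ, MaxEnt ψ → expectation ψ (ampDamp p (outer (vec Y))) ≤ 1 - p / 2 := by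
    refine vec_bijective.surjective.forall.mpr fun X hX => ?_
    exact expectation_ampDamp_outer_le hp0 hp1.le hX hnorm
  refine ⟨(isGreatest_fid _).isLUB.2 (Set.forall_mem_image.mpr hle), ?_⟩
  rw [fid_eq_iff_of_forall_le hle, vec_bijective.surjective.exists, trFirst_outer_vec,
    trFirst_outer_ketChi0 hp1.le, ← exists_maxEnt_eq_smul_M0_mul_iff hp1 htrace]
  exact exists_congr fun X => and_congr_right fun hX =>
    expectation_ampDamp_outer_eq_iff hp0 hp1 hX hnorm

/-- For `0 < p < 1`, over all transmitted states `α|00⟩ + β|11⟩` with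
`α ≥ β > 0`, `α² + β² = 1`, the pre-processed fidelity is at most `1 − p/2`, with
equality iff `α² = 1/(2−p)`, i.e. iff the transmitted state is the non-maximally
entangled state `|χ₀⟩`. -/
theorem fidelity_max_preprocessed (p : ℝ) (hp0 : 0 < p) (hp1 : p < 1) :
    ∀ α β : ℝ, β ≤ α → 0 < β → α ^ 2 + β ^ 2 = 1 →
      Fid (ampDamp p (outer (ketChi α β))) ≤ 1 - p / 2 ∧
      (Fid (ampDamp p (outer (ketChi α β))) = 1 - p / 2 ↔ α ^ 2 = 1 / (2 - p)) := by
  intro α β _ _ hnorm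
  rw [← trFirst_outer_ketChi_eq_ketChi0_iff hp1.le hnorm]
  exact fidelity_max_preprocessed_general p hp0.le hp1 _ ((sum_normSq_ketChi α β).trans hnorm)
end

section
/- (Proposition 1) Let 0 < p < 1 and let |Φ⁺⟩ = (|00⟩ + |11⟩)/√2. Then the maximum achievable fidelity under trace-preserving LOCC of the state ρ(Φ⁺, Λ_p) satisfies F*(ρ(Φ⁺, Λ_p)) < 1 − p/2. In particular, sending a maximally entangled state through the amplitude damping channel followed by optimal local post-processing yields strictly smaller fidelity than the maximum pre-processed fidelity F_max = 1 − p/2. -/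
open Matrix Complex
open scoped Kronecker ComplexOrder

/-!
Weak duality for the semidefinite program: if `Q ≥ 0` and `(ρ + Q)^Γ ≥ 0`, then
`0 ≤ Tr (X (ρ + Q)^Γ) = Tr (X ρ^Γ) + Tr (X^Γ Q)` and `Tr (X^Γ Q) ≤ Tr Q / 2` for every feasible
`X`, so `F*(ρ) ≤ (1 + Tr Q) / 2`.

For `χ = a|00⟩ + b|11⟩` and `s = √(1 - p)`, the operator
`Q = (1 - p) (s a b (|00⟩ - |11⟩)(⟨00| - ⟨11|) + p a² |01⟩⟨01|)` is such a certificate, and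
`p a² + 2 s a b = a² + b² - (s a - b)²` turns its value into
`1 - p/2 - (1 - p) (s a - b)² / 2` when `a² + b² = 1`. The deficit vanishes only for `b = s a`,
which is the state `χ₀` and not `Φ⁺`.
-/

open scoped MatrixOrder Matrix.Norms.L2Operator in
theorem trace_mul_nonneg_of_posSemidef {n 𝕜 : Type*} [Fintype n] [RCLike 𝕜] {A B : Matrix n n 𝕜}
    (hA : A.PosSemidef) (hB : B.PosSemidef) : 0 ≤ (A * B).trace := by
  classical
  obtain ⟨C, rfl⟩ := CStarAlgebra.nonneg_iff_eq_star_mul_self.mp hB.nonneg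
  rw [← Matrix.mul_assoc, Matrix.trace_mul_comm, ← Matrix.mul_assoc]
  exact (hA.mul_mul_conjTranspose_same C).trace_nonneg

theorem outer_eq_vecMulVec (ψ : Q2 → ℂ) : outer ψ = vecMulVec ψ (star ψ) := rfl

theorem outer_posSemidef (ψ : Q2 → ℂ) : (outer ψ).PosSemidef :=
  posSemidef_vecMulVec_self_star ψ

theorem outer_single_add_single (i j : Q2) (a b : ℝ) :
    outer (Pi.single i (a : ℂ) + Pi.single j (b : ℂ)) =
      a ^ 2 • Matrix.single i i 1 + b ^ 2 • Matrix.single j j 1 +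
      (a * b) • (Matrix.single i j 1 + Matrix.single j i 1) := by
  have h_single (m : Q2) (c : ℝ) : Pi.single m (c : ℂ) = c • (Pi.single m 1 : Q2 → ℂ) := by
    rw [← Pi.single_smul, Complex.real_smul, mul_one]
  simp only [outer_eq_vecMulVec, h_single, Matrix.single_eq_single_vecMulVec_single, star_add,
    star_smul, ← Pi.single_star, star_one, star_trivial, vecMulVec_add, add_vecMulVec,
    smul_vecMulVec, vecMulVec_smul]
  module

theorem mul_outer_mul_conjTranspose (A : Matrix Q2 Q2 ℂ) (ψ : Q2 → ℂ) :
    A * outer ψ * Aᴴ = outer (A *ᵥ ψ) := by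
  simp only [outer_eq_vecMulVec, mul_vecMulVec, vecMulVec_mul, star_mulVec]

theorem ptrans_add (A B : Matrix Q2 Q2 ℂ) : ptrans (A + B) = ptrans A + ptrans B := rfl

theorem ptrans_smul (c : ℝ) (A : Matrix Q2 Q2 ℂ) : ptrans (c • A) = c • ptrans A := rfl

theorem ptrans_single (i j k l : Fin 2) (c : ℂ) :
    ptrans (Matrix.single (i, j) (k, l) c) = Matrix.single (i, l) (k, j) c := by
  ext ⟨_, _⟩ ⟨_, _⟩
  simp only [ptrans, Matrix.of_apply, Matrix.single_apply, Prod.mk.injEq]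
  congr 1
  grind

theorem trace_mul_ptrans (A B : Matrix Q2 Q2 ℂ) :
    (A * ptrans B).trace = (ptrans A * B).trace := by
  simp only [Matrix.trace, Matrix.diag, Matrix.mul_apply, ptrans, Matrix.of_apply,
    Fintype.sum_prod_type, Fin.sum_univ_two]
  ring

theorem FStar_le_of_posSemidef_ptrans_add {ρ Q : Matrix Q2 Q2 ℂ} (hQ : Q.PosSemidef)
    (hρQ : (ptrans (ρ + Q)).PosSemidef) : FStar ρ ≤ (1 + Q.trace.re) / 2 := by
  have hQ_trace : 0 ≤ Q.trace.re := (Complex.le_def.mp hQ.trace_nonneg).1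
  refine Real.sSup_le ?_ (by linarith)
  rintro _ ⟨X, -, hX, -, -, hXΓ, rfl⟩
  have h_ppt : 0 ≤ (X * ptrans ρ).trace.re + (ptrans X * Q).trace.re := by
    simpa [ptrans_add, mul_add, trace_mul_ptrans X Q] using
      (Complex.le_def.mp (trace_mul_nonneg_of_posSemidef hX hρQ)).1
  have h_penalty : (ptrans X * Q).trace.re ≤ Q.trace.re / 2 := by
    simpa [sub_mul, inv_mul_eq_div] using
      (Complex.le_def.mp (trace_mul_nonneg_of_posSemidef hXΓ hQ)).1
  linarith

theorem ketChi_eq_single_add_single (a b : ℝ) :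
    ketChi a b = Pi.single (0, 0) (a : ℂ) + Pi.single (1, 1) (b : ℂ) := by
  ext ⟨i, j⟩
  fin_cases i <;> fin_cases j <;> simp [ketChi]

/-- The vector `a|01⟩ + b|10⟩`, the counterpart of `ketChi` on the orthogonal plane, which is
where the partial transpose moves the coherence of `ketChi`. -/
noncomputable def ketAnti (a b : ℝ) : Q2 → ℂ :=
  Pi.single (0, 1) (a : ℂ) + Pi.single (1, 0) (b : ℂ)

theorem outer_ketChi (a b : ℝ) :
    outer (ketChi a b) =
      a ^ 2 • Matrix.single (0, 0) (0, 0) 1 + b ^ 2 • Matrix.single (1, 1) (1, 1) 1 +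
      (a * b) • (Matrix.single (0, 0) (1, 1) 1 + Matrix.single (1, 1) (0, 0) 1) := by
  rw [ketChi_eq_single_add_single, outer_single_add_single]

theorem outer_ketAnti (a b : ℝ) :
    outer (ketAnti a b) =
      a ^ 2 • Matrix.single (0, 1) (0, 1) 1 + b ^ 2 • Matrix.single (1, 0) (1, 0) 1 +
      (a * b) • (Matrix.single (0, 1) (1, 0) 1 + Matrix.single (1, 0) (0, 1) 1) :=
  outer_single_add_single _ _ _ _

theorem one_kronecker_M0_mulVec_ketChi (p a b : ℝ) :
    ((1 : Matrix (Fin 2) (Fin 2) ℂ) ⊗ₖ M0 p) *ᵥ ketChi a b = ketChi a (√(1 - p) * b) := by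
  ext ⟨i, j⟩
  fin_cases i <;> fin_cases j <;>
    simp [M0, ketChi, mulVec, dotProduct, Fintype.sum_prod_type]

theorem one_kronecker_M1_mulVec_ketChi (p a b : ℝ) :
    ((1 : Matrix (Fin 2) (Fin 2) ℂ) ⊗ₖ M1 p) *ᵥ ketChi a b = ketAnti 0 (√p * b) := by
  ext ⟨i, j⟩
  fin_cases i <;> fin_cases j <;>
    simp [M1, ketChi, ketAnti, mulVec, dotProduct, Fintype.sum_prod_type]

theorem ampDamp_outer_ketChi (p a b : ℝ) :
    ampDamp p (outer (ketChi a b)) =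
      outer (ketChi a (√(1 - p) * b)) + outer (ketAnti 0 (√p * b)) := by
  rw [ampDamp, mul_outer_mul_conjTranspose, mul_outer_mul_conjTranspose,
    one_kronecker_M0_mulVec_ketChi, one_kronecker_M1_mulVec_ketChi]

/-- The positive operator `Q` used as a dual certificate for the state `ρ(χ, Λ_p)` with
`χ = ketChi a b`. Its first term reduces the coherence between `|00⟩` and `|11⟩`, and its second
one restores positivity of the partial transpose; the weights make the block of `(ρ + Q)^Γ` on
`|01⟩, |10⟩` have rank one. -/
noncomputable def dualCertificate (p a b : ℝ) : Matrix Q2 Q2 ℂ :=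
  (1 - p) • ((√(1 - p) * (a * b)) • outer (ketChi 1 (-1)) + (p * a ^ 2) • outer (ketAnti 1 0))

theorem dualCertificate_posSemidef {p a b : ℝ} (hp0 : 0 ≤ p) (hp1 : p ≤ 1) (hab : 0 ≤ a * b) :
    (dualCertificate p a b).PosSemidef :=
  (((outer_posSemidef _).smul (by positivity)).add
    ((outer_posSemidef _).smul (by positivity))).smul (sub_nonneg.mpr hp1)

theorem trace_outer_ketChi (a b : ℝ) : (outer (ketChi a b)).trace = (a ^ 2 + b ^ 2 : ℝ) := by
  simp [outer_ketChi]

theorem trace_outer_ketAnti (a b : ℝ) : (outer (ketAnti a b)).trace = (a ^ 2 + b ^ 2 : ℝ) := by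
  simp [outer_ketAnti]

theorem trace_dualCertificate_re (p a b : ℝ) :
    (dualCertificate p a b).trace.re = (1 - p) * (2 * (√(1 - p) * (a * b)) + p * a ^ 2) := by
  simp only [dualCertificate, trace_smul, trace_add, trace_outer_ketChi, trace_outer_ketAnti,
    Complex.smul_re, Complex.add_re, Complex.ofReal_re, smul_eq_mul]
  ring

theorem ptrans_ampDamp_add_dualCertificate {p : ℝ} (hp0 : 0 ≤ p) (hp1 : p ≤ 1) (a b : ℝ) :
    ptrans (ampDamp p (outer (ketChi a b)) + dualCertificate p a b) =
      (a ^ 2 + (1 - p) * (√(1 - p) * (a * b))) • outer (ketChi 1 0) +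
      ((1 - p) * (b ^ 2 + √(1 - p) * (a * b))) • outer (ketChi 0 1) +
      p • outer (ketAnti (√(1 - p) * a) b) := by
  have h_sqrt_p : √p ^ 2 = p := Real.sq_sqrt hp0
  have h_sqrt : √(1 - p) ^ 2 = 1 - p := Real.sq_sqrt (sub_nonneg.mpr hp1)
  rw [ampDamp_outer_ketChi]
  simp only [dualCertificate, outer_ketChi, outer_ketAnti, ptrans_add, ptrans_smul, ptrans_single,
    mul_pow, h_sqrt, h_sqrt_p]
  module

theorem FStar_ampDamp_ketChi_le {p a b : ℝ} (hp0 : 0 ≤ p) (hp1 : p ≤ 1) (hab : 0 ≤ a * b) :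
    FStar (ampDamp p (outer (ketChi a b))) ≤
      (1 + (1 - p) * (a ^ 2 + b ^ 2 - (√(1 - p) * a - b) ^ 2)) / 2 := by
  have h_sqrt : √(1 - p) ^ 2 = 1 - p := Real.sq_sqrt (sub_nonneg.mpr hp1)
  have h_ppt : (ptrans (ampDamp p (outer (ketChi a b)) + dualCertificate p a b)).PosSemidef := by
    rw [ptrans_ampDamp_add_dualCertificate hp0 hp1]
    have : 0 ≤ 1 - p := sub_nonneg.mpr hp1
    exact (((outer_posSemidef _).smul (by positivity)).add
      ((outer_posSemidef _).smul (by positivity))).add ((outer_posSemidef _).smul hp0)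
  calc FStar (ampDamp p (outer (ketChi a b)))
      ≤ (1 + (dualCertificate p a b).trace.re) / 2 :=
        FStar_le_of_posSemidef_ptrans_add (dualCertificate_posSemidef hp0 hp1 hab) h_ppt
    _ = (1 + (1 - p) * (a ^ 2 + b ^ 2 - (√(1 - p) * a - b) ^ 2)) / 2 := by
        rw [trace_dualCertificate_re]
        linear_combination (1 - p) * a ^ 2 / 2 * h_sqrt

theorem FStar_phiPlus_lt_Fmax_general {p a b : ℝ} (hp0 : 0 ≤ p) (hp1 : p < 1)
    (hab : 0 ≤ a * b) (h_unit : a ^ 2 + b ^ 2 = 1) (h_ne : √(1 - p) * a ≠ b) :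
    FStar (ampDamp p (outer (ketChi a b))) < 1 - p / 2 := by
  have h_gap : 0 < (1 - p) * (√(1 - p) * a - b) ^ 2 :=
    mul_pos (sub_pos.mpr hp1) (sq_pos_of_ne_zero (sub_ne_zero.mpr h_ne))
  have h_bound := FStar_ampDamp_ketChi_le hp0 hp1.le hab
  rw [h_unit] at h_bound
  linarith

/-- Proposition 1: For `0 < p < 1`, the maximum achievable fidelity under
trace-preserving LOCC of `ρ(Φ⁺, Λ_p)` is strictly smaller than the maximum
pre-processed fidelity `F_max = 1 − p/2`. -/
theorem FStar_phiPlus_lt_Fmax (p : ℝ) (hp0 : 0 < p) (hp1 : p < 1) :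
    FStar (ampDamp p (outer phiPlus)) < 1 - p / 2 := by
  have h_sqrt : √(1 - p) < 1 := by rw [Real.sqrt_lt' one_pos]; linarith
  refine FStar_phiPlus_lt_Fmax_general hp0.le hp1 (by positivity) (by norm_num) ?_
  exact (mul_lt_of_lt_one_left (by positivity) h_sqrt).ne
end
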